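/- Let q be a prime power, let T be a point of ℓ∞ in PG(2,q³), and let ℓ be an order-q-subline of ℓ∞ containing T. Then the number of tangent splashes of ℓ∞ with centre T that contain ℓ is exactly q+1. -/

import Mathlib

namespace TangentSplashPaper

open Projectivization

/-- The point set of the projective plane `PG(2,K)`. -/
abbrev PGPoint (K : Type*) [Field K] := Projectivization K (Fin 3 → K)

/-- `ℓ` is a line of `PG(2,K)`: the set of points lying in a fixed
2-dimensional linear subspace. -/
def IsLine {K : Type*} [Field K] (ℓ : Set (PGPoint K)) : Prop :=
  ∃ W : Submodule K (Fin 3 → K), Module.finrank K W = 2 ∧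
    ℓ = {P : PGPoint K | P.submodule ≤ W}

/-- The distinguished line `ℓ∞` of `PG(2,K)`: points whose last homogeneous
coordinate vanishes. -/
def linf (K : Type*) [Field K] : Set (PGPoint K) := {P : PGPoint K | P.rep 2 = 0}

/-- The homography of `PG(2,K)` induced by a linear automorphism of `K³`;
as maps of point sets, these are exactly the elements of `PGL(3,K)`. -/
def hmap {K : Type*} [Field K] (f : (Fin 3 → K) ≃ₗ[K] (Fin 3 → K)) :
    PGPoint K → PGPoint K :=
  Projectivization.map f.toLinearMap f.injective

/-- The base subplane `PG(2,F)`: points admitting homogeneous coordinates in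
the subfield `F`. -/
def basePlane (F K : Type*) [Field F] [Field K] [Algebra F K] : Set (PGPoint K) :=
  {P : PGPoint K | ∃ v : Fin 3 → K, ∃ hv : v ≠ 0, P = Projectivization.mk K v hv ∧
    ∀ i, v i ∈ (algebraMap F K).range}

/-- An order-`q`-subplane of `PG(2,K)` (`q = |F|`): an image of `PG(2,F)`
under a homography. -/
def IsSubplane (F : Type*) {K : Type*} [Field F] [Field K] [Algebra F K]
    (S : Set (PGPoint K)) : Prop :=
  ∃ f : (Fin 3 → K) ≃ₗ[K] (Fin 3 → K), S = hmap f '' basePlane F K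

/-- An order-`q`-subline of `PG(2,K)`: the intersection of an order-`q`-subplane
with a line of `PG(2,K)` meeting it in `q+1` points. -/
def IsSubline (F : Type*) {K : Type*} [Field F] [Field K] [Algebra F K] (q : ℕ)
    (b : Set (PGPoint K)) : Prop :=
  ∃ S ℓ : Set (PGPoint K), IsSubplane F S ∧ IsLine ℓ ∧
    (S ∩ ℓ).ncard = q + 1 ∧ b = S ∩ ℓ

/-- The splash of a subplane `π` on `ℓ∞`: all points of `ℓ∞` lying on a line
of `PG(2,K)` spanned by two points of `π`. -/
def splash {K : Type*} [Field K] (π : Set (PGPoint K)) : Set (PGPoint K) :=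
  {X : PGPoint K | X ∈ linf K ∧ ∃ P Q : PGPoint K, P ∈ π ∧ Q ∈ π ∧ P ≠ Q ∧
    ∃ ℓ : Set (PGPoint K), IsLine ℓ ∧ P ∈ ℓ ∧ Q ∈ ℓ ∧ X ∈ ℓ}

/-- `S` is a tangent splash of `ℓ∞` with centre `T`: `S` is the splash of some
order-`q`-subplane meeting `ℓ∞` exactly in the point `T`. -/
def IsTangentSplash (F : Type*) {K : Type*} [Field F] [Field K] [Algebra F K]
    (S : Set (PGPoint K)) (T : PGPoint K) : Prop :=
  ∃ π : Set (PGPoint K), IsSubplane F π ∧ π ∩ linf K = {T} ∧ S = splash π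

/-- The set `t_P`: points of `ℓ∞` lying on the extension of a line of the
subplane `π` through the point `P` (lines of `π` are the lines of `PG(2,K)`
meeting `π` in `q+1` points). -/
def pencilTrace {K : Type*} [Field K] (q : ℕ) (π : Set (PGPoint K))
    (P : PGPoint K) : Set (PGPoint K) :=
  {X : PGPoint K | X ∈ linf K ∧ ∃ ℓ : Set (PGPoint K), IsLine ℓ ∧ P ∈ ℓ ∧
    (π ∩ ℓ).ncard = q + 1 ∧ X ∈ ℓ}

/-!
The line of `PG(2,K)` with dual coordinates `c` is a line of the base subplane exactly when `c` can
be chosen over `F`. Hence a point `v` of `ℓ∞` lies on the splash of the image of `PG(2,F)` under `f`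
if and only if the three coordinates of `f⁻¹ v` are linearly dependent over `F`. Choose an affine
coordinate on `ℓ∞`, with values in `K`, that puts the centre `T` at infinity. Then the tangent
splashes with centre `T` are the sets `{T} ∪ A` for `A` an affine `F`-plane of `K`, and the sublines
of `ℓ∞` through `T` are the sets `{T} ∪ L` for `L` an affine `F`-line of `K`. The planes containing
a line with direction `N` correspond to the points of the projective space of `K / N` over `F`,
which is a projective line when `[K : F] = 3`.
-/

open Module Matrix

section LinearAlgebra

variable {k V V' : Type*} [Field k] [AddCommGroup V] [Module k V] [AddCommGroup V'] [Module k V']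

theorem exists_linearEquiv_apply_eq {ι : Type*} [Finite ι] {v w : ι → V}
    (hv : LinearIndependent k v) (hw : LinearIndependent k w) :
    ∃ g : V ≃ₗ[k] V, ∀ i, g (v i) = w i := by
  let e := hv.linearCombinationEquiv.symm ≪≫ₗ hw.linearCombinationEquiv
  have : FiniteDimensional k (Submodule.span k (Set.range v)) :=
    FiniteDimensional.span_of_finite k (Set.finite_range v)
  obtain ⟨g, hg⟩ := Submodule.exists_linearEquiv_restrict_eq e
  refine ⟨g, fun i ↦ ?_⟩
  have hvi : (hv.linearCombinationEquiv (Finsupp.single i 1) : V) = v i := by simp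
  rw [← hvi, ← hg]
  simp [e]

theorem finrank_comap_equiv (f : V ≃ₗ[k] V') (W : Submodule k V') :
    finrank k (W.comap f.toLinearMap) = finrank k W := by
  rw [Submodule.comap_equiv_eq_map_symm, LinearEquiv.finrank_map_eq]

theorem finrank_map_of_disjoint_ker {f : V →ₗ[k] V'} {p : Submodule k V}
    (h : Disjoint p (LinearMap.ker f)) : finrank k (p.map f) = finrank k p := by
  rw [← LinearMap.range_domRestrict,
    LinearMap.finrank_range_of_inj (LinearMap.injective_domRestrict_iff.mpr h)]

theorem linearIndependent_map_pair (f : V ≃ₗ[k] V') {a b : V} :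
    LinearIndependent k ![f a, f b] ↔ LinearIndependent k ![a, b] := by
  have hf := f.toLinearMap.linearIndependent_iff f.ker (v := ![a, b])
  rwa [← FinVec.map_eq] at hf

theorem span_pair_eq_of_finrank_eq_two {W : Submodule k V} (hW : finrank k W = 2) {a b : V}
    (hab : LinearIndependent k ![a, b]) (ha : a ∈ W) (hb : b ∈ W) :
    Submodule.span k {a, b} = W := by
  have : FiniteDimensional k W := FiniteDimensional.of_finrank_pos (by omega)
  refine Submodule.eq_of_le_of_finrank_le (Submodule.span_le.mpr (Set.pair_subset ha hb)) ?_
  rw [hW, ← Matrix.range_cons_cons_empty a b ![], finrank_span_eq_card hab, Fintype.card_fin]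

theorem exists_mem_linearIndependent_pair {W : Submodule k V} (hW : finrank k W = 2) {a : V}
    (ha : a ∈ W) (ha₀ : a ≠ 0) : ∃ b ∈ W, LinearIndependent k ![a, b] := by
  obtain ⟨b, hab⟩ := exists_linearIndependent_pair_of_one_lt_finrank (R := k) (M := W)
    (by omega) (x := ⟨a, ha⟩) (by simpa using ha₀)
  refine ⟨b, b.2, ?_⟩
  simpa [LinearIndependent.pair_iff, Subtype.ext_iff] using hab

theorem exists_linearIndependent_pair_mem {W : Submodule k V} (hW : finrank k W = 2) :
    ∃ a ∈ W, ∃ b ∈ W, LinearIndependent k ![a, b] := by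
  have hW₀ : W ≠ ⊥ := by rintro rfl; simp at hW
  obtain ⟨a, ha, ha₀⟩ := Submodule.exists_mem_ne_zero_of_ne_bot hW₀
  exact ⟨a, ha, exists_mem_linearIndependent_pair hW ha ha₀⟩

theorem exists_dotProduct_eq_one {ι : Type*} [Fintype ι] {y : ι → k} (hy : y ≠ 0) :
    ∃ c : ι → k, c ⬝ᵥ y = 1 := by
  classical
  obtain ⟨i, hi⟩ := Function.ne_iff.mp hy
  exact ⟨Pi.single i (y i)⁻¹, by rw [single_dotProduct, inv_mul_cancel₀ hi]⟩

theorem nonempty_of_finrank_direction_pos {P : Type*} [AddTorsor V P] {A : AffineSubspace k P}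
    (hA : 0 < finrank k A.direction) : (A : Set P).Nonempty := by
  rw [AffineSubspace.nonempty_iff_ne_bot]
  rintro rfl
  rw [AffineSubspace.direction_bot, finrank_bot] at hA
  exact hA.false

theorem mk_submodule_le_iff {v : V} (hv : v ≠ 0) {W : Submodule k V} :
    (mk k v hv).submodule ≤ W ↔ v ∈ W := by
  rw [submodule_mk, Submodule.span_singleton_le_iff_mem]

theorem linearIndependent_pair_iff_mk_ne_mk {v w : V} (hv : v ≠ 0) (hw : w ≠ 0) :
    LinearIndependent k ![v, w] ↔ mk k v hv ≠ mk k w hw := by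
  rw [LinearIndependent.pair_symm_iff, LinearIndependent.pair_iff' hw, ne_eq, mk_eq_mk_iff',
    not_exists]

end LinearAlgebra

section DualLine

variable {k : Type*} [Field k]

/-- The plane of `k³` with equation `c ⬝ᵥ v = 0`, that is, the line of `PG(2,k)` with dual
coordinates `c`. -/
def dualLine (c : Fin 3 → k) : Submodule k (Fin 3 → k) :=
  LinearMap.ker (dotProductBilin k k c)

theorem mem_dualLine {c v : Fin 3 → k} : v ∈ dualLine c ↔ c ⬝ᵥ v = 0 := Iff.rfl

theorem finrank_dualLine {c : Fin 3 → k} (hc : c ≠ 0) : finrank k (dualLine c) = 2 := by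
  have hform : dotProductBilin k k c ≠ 0 := fun h ↦
    hc (dotProduct_eq_zero c fun v ↦ LinearMap.congr_fun h v)
  have := Module.Dual.finrank_ker_add_one_of_ne_zero hform
  rw [finrank_fin_fun] at this
  exact Nat.succ_injective this

theorem left_mem_dualLine_cross (a b : Fin 3 → k) : a ∈ dualLine (crossProduct a b) := by
  rw [mem_dualLine, dotProduct_comm, dot_self_cross]

theorem right_mem_dualLine_cross (a b : Fin 3 → k) : b ∈ dualLine (crossProduct a b) := by
  rw [mem_dualLine, dotProduct_comm, dot_cross_self]

theorem span_pair_eq_dualLine_cross {a b : Fin 3 → k} (hab : LinearIndependent k ![a, b]) :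
    Submodule.span k {a, b} = dualLine (crossProduct a b) := by
  have hc := finrank_dualLine (crossProduct_ne_zero_iff_linearIndependent.mpr hab)
  exact span_pair_eq_of_finrank_eq_two hc hab (left_mem_dualLine_cross a b)
    (right_mem_dualLine_cross a b)

end DualLine

section Embed

variable {F K : Type*} [Field F] [Field K] [Algebra F K]

/-- Extension of scalars on coordinate vectors. -/
def embed (F K : Type*) [Field F] [Field K] [Algebra F K] :
    (Fin 3 → F) →ₛₗ[algebraMap F K] (Fin 3 → K) where
  toFun y i := algebraMap F K (y i)
  map_add' y z := by ext i; simp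
  map_smul' a y := by ext i; simp

theorem embed_apply (y : Fin 3 → F) (i : Fin 3) : embed F K y i = algebraMap F K (y i) := rfl

theorem embed_injective : Function.Injective (embed F K) := fun _ _ h ↦
  funext fun i ↦ (algebraMap F K).injective (congrFun h i)

theorem embed_eq_zero {y : Fin 3 → F} : embed F K y = 0 ↔ y = 0 :=
  map_eq_zero_iff _ embed_injective

theorem embed_dotProduct (c y : Fin 3 → F) :
    embed F K c ⬝ᵥ embed F K y = algebraMap F K (c ⬝ᵥ y) :=
  ((algebraMap F K).map_dotProduct c y).symm

theorem embed_dotProduct_eq_linearCombination (c : Fin 3 → F) (z : Fin 3 → K) :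
    embed F K c ⬝ᵥ z = Fintype.linearCombination F z c := by
  simp only [dotProduct, Fintype.linearCombination_apply, Algebra.smul_def, embed_apply]

theorem embed_crossProduct (a b : Fin 3 → F) :
    crossProduct (embed F K a) (embed F K b) = embed F K (crossProduct a b) := by
  ext i
  fin_cases i <;> simp [cross_apply, embed_apply]

theorem embed_mem_dualLine {c y : Fin 3 → F} :
    embed F K y ∈ dualLine (embed F K c) ↔ y ∈ dualLine c := by
  rw [mem_dualLine, mem_dualLine, embed_dotProduct, map_eq_zero]

theorem linearIndependent_embed_pair {a b : Fin 3 → F} :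
    LinearIndependent K ![embed F K a, embed F K b] ↔ LinearIndependent F ![a, b] := by
  rw [← crossProduct_ne_zero_iff_linearIndependent, embed_crossProduct, ne_eq, embed_eq_zero,
    ← crossProduct_ne_zero_iff_linearIndependent]

theorem exists_eq_dualLine_embed_iff {W : Submodule K (Fin 3 → K)} (hW : finrank K W = 2) :
    (∃ c : Fin 3 → F, c ≠ 0 ∧ W = dualLine (embed F K c)) ↔
      ∃ a b : Fin 3 → F, LinearIndependent F ![a, b] ∧ embed F K a ∈ W ∧ embed F K b ∈ W := by
  constructor
  · rintro ⟨c, hc, rfl⟩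
    obtain ⟨a, ha, b, hb, hab⟩ :=
      exists_linearIndependent_pair_mem (W := dualLine c) (finrank_dualLine hc)
    exact ⟨a, b, hab, embed_mem_dualLine.mpr ha, embed_mem_dualLine.mpr hb⟩
  · rintro ⟨a, b, hab, ha, hb⟩
    have habK := (linearIndependent_embed_pair (K := K)).mpr hab
    refine ⟨crossProduct a b, crossProduct_ne_zero_iff_linearIndependent.mpr hab, ?_⟩
    rw [← embed_crossProduct, ← span_pair_eq_dualLine_cross habK,
      span_pair_eq_of_finrank_eq_two hW habK ha hb]

theorem mem_span_pair_of_embed_mem {W : Submodule K (Fin 3 → K)} (hW : finrank K W = 2)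
    {a b e : Fin 3 → F} (hab : LinearIndependent F ![a, b]) (ha : embed F K a ∈ W)
    (hb : embed F K b ∈ W) (he : embed F K e ∈ W) : e ∈ Submodule.span F {a, b} := by
  obtain ⟨c, hc, rfl⟩ := (exists_eq_dualLine_embed_iff hW).mpr ⟨a, b, hab, ha, hb⟩
  rw [embed_mem_dualLine] at ha hb he
  rwa [span_pair_eq_of_finrank_eq_two (W := dualLine c) (finrank_dualLine hc) hab ha hb]

end Embed

section Points

variable {K : Type*} [Field K]

/-- The plane of `K³` whose points form the line `linf K`. -/
def infinityPlane (K : Type*) [Field K] : Submodule K (Fin 3 → K) :=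
  dualLine (Pi.single 2 1)

theorem mem_infinityPlane {v : Fin 3 → K} : v ∈ infinityPlane K ↔ v 2 = 0 := by
  rw [infinityPlane, mem_dualLine, single_one_dotProduct]

theorem finrank_infinityPlane : finrank K (infinityPlane K) = 2 :=
  finrank_dualLine (by simp)

theorem mk_mem_linf {v : Fin 3 → K} (hv : v ≠ 0) : mk K v hv ∈ linf K ↔ v ∈ infinityPlane K := by
  rw [← mk_submodule_le_iff hv, submodule_eq, Submodule.span_singleton_le_iff_mem,
    mem_infinityPlane]
  rfl

end Points

section Subplanes

variable {F K : Type*} [Field F] [Field K] [Algebra F K]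

theorem mem_image_hmap_basePlane {f : (Fin 3 → K) ≃ₗ[K] (Fin 3 → K)} {P : PGPoint K} :
    P ∈ hmap f '' basePlane F K ↔
      ∃ y : Fin 3 → F, ∃ hy : f (embed F K y) ≠ 0, P = mk K (f (embed F K y)) hy := by
  constructor
  · rintro ⟨_, ⟨v, hv, rfl, hvF⟩, rfl⟩
    choose y hy using hvF
    obtain rfl : embed F K y = v := funext hy
    exact ⟨y, f.map_ne_zero_iff.mpr hv, map_mk _ f.injective _ _⟩
  · rintro ⟨y, hy, rfl⟩
    have hy₀ : embed F K y ≠ 0 := f.map_ne_zero_iff.mp hy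
    exact ⟨mk K _ hy₀, ⟨_, hy₀, rfl, fun i ↦ ⟨y i, rfl⟩⟩, map_mk _ f.injective _ _⟩

theorem linearIndependent_map_embed_pair {f : (Fin 3 → K) ≃ₗ[K] (Fin 3 → K)} {a b : Fin 3 → F} :
    LinearIndependent K ![f (embed F K a), f (embed F K b)] ↔ LinearIndependent F ![a, b] :=
  (linearIndependent_map_pair f).trans linearIndependent_embed_pair

theorem IsSubplane.exists_map_embed_eq {S : Set (PGPoint K)} (hS : IsSubplane F S)
    {v : Fin 3 → K} {hv : v ≠ 0} (hvS : mk K v hv ∈ S) :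
    ∃ f : (Fin 3 → K) ≃ₗ[K] (Fin 3 → K), ∃ y : Fin 3 → F,
      S = hmap f '' basePlane F K ∧ f (embed F K y) = v := by
  obtain ⟨f, rfl⟩ := hS
  obtain ⟨y, hy, hvy⟩ := mem_image_hmap_basePlane.mp hvS
  obtain ⟨m, rfl⟩ := (mk_eq_mk_iff K _ _ hv hy).mp hvy
  refine ⟨f ≪≫ₗ LinearEquiv.smulOfUnit m, y, ?_, rfl⟩
  congr 1
  ext P : 1
  induction P using Projectivization.ind with
  | h w hw => exact (mk_eq_mk_iff K _ _ (f.map_ne_zero_iff.mpr hw)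
      ((smul_ne_zero_iff_ne m).mpr (f.map_ne_zero_iff.mpr hw))).mpr ⟨m⁻¹, inv_smul_smul m _⟩

theorem mk_mem_splash_iff {f : (Fin 3 → K) ≃ₗ[K] (Fin 3 → K)} {v : Fin 3 → K} (hv : v ≠ 0) :
    mk K v hv ∈ splash (hmap f '' basePlane F K) ↔
      v ∈ infinityPlane K ∧
        ∃ c : Fin 3 → F, c ≠ 0 ∧ Fintype.linearCombination F (f.symm v) c = 0 := by
  simp only [← embed_dotProduct_eq_linearCombination]
  refine and_congr (mk_mem_linf hv) ⟨?_, ?_⟩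
  · rintro ⟨P, Q, hP, hQ, hPQ, _, ⟨W, hW, rfl⟩, hPW, hQW, hvW⟩
    obtain ⟨a, ha, rfl⟩ := mem_image_hmap_basePlane.mp hP
    obtain ⟨b, hb, rfl⟩ := mem_image_hmap_basePlane.mp hQ
    have hab := linearIndependent_map_embed_pair.mp
      ((linearIndependent_pair_iff_mk_ne_mk ha hb).mpr hPQ)
    obtain ⟨c, hc, hWc⟩ := (exists_eq_dualLine_embed_iff ((finrank_comap_equiv f W).trans hW)).mpr
      ⟨a, b, hab, (mk_submodule_le_iff ha).mp hPW, (mk_submodule_le_iff hb).mp hQW⟩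
    have hvW' : f.symm v ∈ W.comap f.toLinearMap := by
      simpa using (mk_submodule_le_iff hv).mp hvW
    exact ⟨c, hc, mem_dualLine.mp (hWc ▸ hvW')⟩
  · rintro ⟨c, hc, hcv⟩
    have hcK : finrank K (dualLine (embed F K c)) = 2 :=
      finrank_dualLine (embed_eq_zero.not.mpr hc)
    obtain ⟨a, b, hab, ha, hb⟩ := (exists_eq_dualLine_embed_iff hcK).mp ⟨c, hc, rfl⟩
    have habf := (linearIndependent_map_embed_pair (f := f)).mpr hab
    have ha₀ : f (embed F K a) ≠ 0 := habf.ne_zero 0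
    have hb₀ : f (embed F K b) ≠ 0 := habf.ne_zero 1
    refine ⟨mk K _ ha₀, mk K _ hb₀, mem_image_hmap_basePlane.mpr ⟨a, ha₀, rfl⟩,
      mem_image_hmap_basePlane.mpr ⟨b, hb₀, rfl⟩,
      (linearIndependent_pair_iff_mk_ne_mk ha₀ hb₀).mp habf, _,
      ⟨(dualLine (embed F K c)).comap f.symm.toLinearMap, by rw [finrank_comap_equiv, hcK], rfl⟩,
      (mk_submodule_le_iff ha₀).mpr ?_, (mk_submodule_le_iff hb₀).mpr ?_,
      (mk_submodule_le_iff hv).mpr hcv⟩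
    · simpa using ha
    · simpa using hb

end Subplanes

/-- A basis `t, u` of the plane underlying `linf K`. It is used as a coordinate system on
`linf K` that sends `t` to infinity. -/
structure InfinityFrame (K : Type*) [Field K] where
  t : Fin 3 → K
  u : Fin 3 → K
  t_mem : t ∈ infinityPlane K
  u_mem : u ∈ infinityPlane K
  linearIndependent : LinearIndependent K ![t, u]

namespace InfinityFrame

variable {K : Type*} [Field K] (φ : InfinityFrame K)

theorem t_ne_zero : φ.t ≠ 0 := φ.linearIndependent.ne_zero 0

theorem smul_t_add_u_mem (x : K) : x • φ.t + φ.u ∈ infinityPlane K :=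
  add_mem (Submodule.smul_mem _ x φ.t_mem) φ.u_mem

theorem eq_zero_of_smul_t_add_smul_u {a b : K} (h : a • φ.t + b • φ.u = 0) : a = 0 ∧ b = 0 :=
  LinearIndependent.pair_iff.mp φ.linearIndependent a b h

theorem smul_t_add_u_ne_zero (x : K) : x • φ.t + φ.u ≠ 0 := fun h ↦
  one_ne_zero (φ.eq_zero_of_smul_t_add_smul_u (a := x) (b := 1) (by rwa [one_smul])).2

theorem linearIndependent_t_smul {m : K} (hm : m ≠ 0) (x : K) :
    LinearIndependent K ![φ.t, m • (x • φ.t + φ.u)] := by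
  refine LinearIndependent.pair_iff.mpr fun r s hrs ↦ ?_
  obtain ⟨hr, hs⟩ := φ.eq_zero_of_smul_t_add_smul_u (a := r + s * m * x) (b := s * m)
    (by linear_combination (norm := module) hrs)
  have hs₀ : s = 0 := (mul_eq_zero.mp hs).resolve_right hm
  exact ⟨by simpa [hs₀] using hr, hs₀⟩

/-- The point at infinity of the coordinate system on `linf K`. -/
def center : PGPoint K := Projectivization.mk K φ.t φ.t_ne_zero

/-- The point of `linf K` with affine coordinate `x`. -/
def point (x : K) : PGPoint K := Projectivization.mk K (x • φ.t + φ.u) (φ.smul_t_add_u_ne_zero x)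

/-- The points of `linf K` with affine coordinate in `A`, together with the centre. -/
def adjoinCenter (A : Set K) : Set (PGPoint K) := insert φ.center (φ.point '' A)

theorem center_mem_linf : φ.center ∈ linf K := (mk_mem_linf _).mpr φ.t_mem

theorem point_injective : Function.Injective φ.point := fun x y hxy ↦ by
  obtain ⟨a, ha⟩ := (mk_eq_mk_iff' K _ _ _ _).mp hxy
  have h : (a * y - x) • φ.t + (a - 1) • φ.u = 0 := by
    linear_combination (norm := module) ha
  obtain ⟨hx, ha₁⟩ := φ.eq_zero_of_smul_t_add_smul_u h
  rw [sub_eq_zero.mp ha₁, one_mul] at hx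
  exact (sub_eq_zero.mp hx).symm

theorem point_ne_center (x : K) : φ.point x ≠ φ.center := fun h ↦ by
  obtain ⟨a, ha⟩ := (mk_eq_mk_iff' K _ _ _ _).mp h
  have h₀ : (x - a) • φ.t + (1 : K) • φ.u = 0 := by
    linear_combination (norm := module) -ha
  exact one_ne_zero (φ.eq_zero_of_smul_t_add_smul_u h₀).2

theorem eq_center_or_eq_point {P : PGPoint K} (hP : P ∈ linf K) :
    P = φ.center ∨ ∃ x, P = φ.point x := by
  induction P using Projectivization.ind with
  | h v hv =>
    rw [mk_mem_linf, ← span_pair_eq_of_finrank_eq_two (W := infinityPlane K)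
      finrank_infinityPlane φ.linearIndependent φ.t_mem φ.u_mem, Submodule.mem_span_pair] at hP
    obtain ⟨a, b, rfl⟩ := hP
    by_cases hb : b = 0
    · left
      exact (mk_eq_mk_iff' K _ _ _ _).mpr ⟨a, by simp [hb]⟩
    · refine .inr ⟨a / b, (mk_eq_mk_iff' K _ _ _ _).mpr ⟨b, ?_⟩⟩
      rw [smul_add, smul_smul, mul_div_cancel₀ _ hb]

theorem point_mem_linf (x : K) : φ.point x ∈ linf K := (mk_mem_linf _).mpr (φ.smul_t_add_u_mem x)

theorem center_mem_adjoinCenter (A : Set K) : φ.center ∈ φ.adjoinCenter A := Set.mem_insert _ _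

theorem point_mem_adjoinCenter {A : Set K} {x : K} : φ.point x ∈ φ.adjoinCenter A ↔ x ∈ A := by
  rw [adjoinCenter, Set.mem_insert_iff, φ.point_injective.mem_set_image]
  exact or_iff_right (φ.point_ne_center x)

theorem adjoinCenter_subset_adjoinCenter {A B : Set K} :
    φ.adjoinCenter A ⊆ φ.adjoinCenter B ↔ A ⊆ B := by
  refine ⟨fun h x hx ↦ ?_, fun h ↦ Set.insert_subset_insert (Set.image_mono h)⟩
  exact φ.point_mem_adjoinCenter.mp (h (φ.point_mem_adjoinCenter.mpr hx))

theorem adjoinCenter_injective : Function.Injective φ.adjoinCenter := fun _ _ h ↦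
  (φ.adjoinCenter_subset_adjoinCenter.mp h.subset).antisymm
    (φ.adjoinCenter_subset_adjoinCenter.mp h.superset)

theorem eq_adjoinCenter {S : Set (PGPoint K)} {A : Set K} (hS : S ⊆ linf K) (hc : φ.center ∈ S)
    (hA : ∀ x, φ.point x ∈ S ↔ x ∈ A) : S = φ.adjoinCenter A := by
  ext P
  refine ⟨fun hP ↦ ?_, ?_⟩
  · rcases φ.eq_center_or_eq_point (hS hP) with rfl | ⟨x, rfl⟩
    · exact φ.center_mem_adjoinCenter A
    · exact φ.point_mem_adjoinCenter.mpr ((hA x).mp hP)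
  · rintro (rfl | ⟨x, hx, rfl⟩)
    · exact hc
    · exact (hA x).mpr hx

end InfinityFrame

theorem exists_infinityFrame_center_eq {K : Type*} [Field K] {T : PGPoint K} (hT : T ∈ linf K) :
    ∃ φ : InfinityFrame K, φ.center = T := by
  induction T using Projectivization.ind with
  | h t ht =>
    rw [mk_mem_linf] at hT
    obtain ⟨u, hu, htu⟩ := exists_mem_linearIndependent_pair (W := infinityPlane K)
      finrank_infinityPlane hT ht
    exact ⟨⟨t, u, hT, hu, htu⟩, rfl⟩

section TangentSplash

variable {F K : Type*} [Field F] [Field K] [Algebra F K] {φ : InfinityFrame K}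
  {f : (Fin 3 → K) ≃ₗ[K] (Fin 3 → K)} {y : Fin 3 → F}

theorem center_mem_image_hmap (hfy : f (embed F K y) = φ.t) :
    φ.center ∈ hmap f '' basePlane F K :=
  mem_image_hmap_basePlane.mpr ⟨y, hfy ▸ φ.t_ne_zero, by simp only [InfinityFrame.center, hfy]⟩

theorem linearCombination_symm_smul_t_add_u (hfy : f (embed F K y) = φ.t) (c : Fin 3 → F) (x : K) :
    Fintype.linearCombination F (f.symm (x • φ.t + φ.u)) c =
      (c ⬝ᵥ y) • x + Fintype.linearCombination F (f.symm φ.u) c := by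
  rw [map_add, map_smul, ← hfy, f.symm_apply_apply]
  simp only [← embed_dotProduct_eq_linearCombination, dotProduct_add, dotProduct_smul,
    embed_dotProduct, smul_eq_mul]
  rw [Algebra.smul_def, mul_comm]

theorem comap_infinityPlane_eq_dualLine_embed_iff (hfy : f (embed F K y) = φ.t) {c : Fin 3 → F}
    (hc : c ≠ 0) :
    (infinityPlane K).comap f.toLinearMap = dualLine (embed F K c) ↔
      c ∈ dualLine y ∧ c ∈ LinearMap.ker (Fintype.linearCombination F (f.symm φ.u)) := by
  have hyu : LinearIndependent K ![embed F K y, f.symm φ.u] := by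
    rw [← linearIndependent_map_pair f, f.apply_symm_apply, hfy]
    exact φ.linearIndependent
  have hspan := span_pair_eq_of_finrank_eq_two (W := (infinityPlane K).comap f.toLinearMap)
    ((finrank_comap_equiv f _).trans finrank_infinityPlane) hyu (by simpa [hfy] using φ.t_mem)
    (by simpa using φ.u_mem)
  rw [mem_dualLine, dotProduct_comm, ← mem_dualLine, ← embed_mem_dualLine (K := K),
    LinearMap.mem_ker, ← embed_dotProduct_eq_linearCombination, ← mem_dualLine, ← hspan]
  refine ⟨fun h ↦ ?_, fun ⟨hy, hu⟩ ↦ ?_⟩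
  · exact ⟨h ▸ Submodule.subset_span (by simp), h ▸ Submodule.subset_span (by simp)⟩
  · exact span_pair_eq_of_finrank_eq_two (W := dualLine (embed F K c))
      (finrank_dualLine (embed_eq_zero.not.mpr hc)) hyu hy hu

/-- The subplane meets `linf K` in a second point exactly when `linf K` is one of its lines, and the
dual coordinates of `linf K` are then a nonzero common vector of the two submodules. -/
theorem image_hmap_inter_linf_eq_singleton_iff (hfy : f (embed F K y) = φ.t) :
    hmap f '' basePlane F K ∩ linf K = {φ.center} ↔
      Disjoint (dualLine y) (LinearMap.ker (Fintype.linearCombination F (f.symm φ.u))) := by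
  have hW : finrank K ((infinityPlane K).comap f.toLinearMap) = 2 :=
    (finrank_comap_equiv f _).trans finrank_infinityPlane
  rw [Submodule.disjoint_def]
  constructor
  · intro h c hcy hcu
    by_contra hc
    obtain ⟨a, b, hab, ha, hb⟩ := (exists_eq_dualLine_embed_iff hW).mp
      ⟨c, hc, (comap_infinityPlane_eq_dualLine_embed_iff hfy hc).mpr ⟨hcy, hcu⟩⟩
    have hab' := linearIndependent_map_embed_pair (f := f).mpr hab
    have eq_center {z : Fin 3 → F} (hz : f (embed F K z) ≠ 0)
        (hzW : f (embed F K z) ∈ infinityPlane K) : mk K _ hz = φ.center :=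
      h.subset ⟨mem_image_hmap_basePlane.mpr ⟨z, hz, rfl⟩, (mk_mem_linf hz).mpr hzW⟩
    refine (linearIndependent_pair_iff_mk_ne_mk (hab'.ne_zero 0) (hab'.ne_zero 1)).mp hab' ?_
    exact (eq_center _ ha).trans (eq_center _ hb).symm
  · intro h
    refine Set.eq_singleton_iff_unique_mem.mpr
      ⟨⟨center_mem_image_hmap hfy, φ.center_mem_linf⟩, fun P ⟨hP, hPinf⟩ ↦ ?_⟩
    obtain ⟨b, hb, rfl⟩ := mem_image_hmap_basePlane.mp hP
    by_contra hne
    have hyb : LinearIndependent F ![y, b] := by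
      rw [← linearIndependent_map_embed_pair (f := f), hfy,
        linearIndependent_pair_iff_mk_ne_mk φ.t_ne_zero hb]
      exact Ne.symm hne
    obtain ⟨c, hc, hWc⟩ := (exists_eq_dualLine_embed_iff hW).mpr
      ⟨y, b, hyb, by simpa [hfy] using φ.t_mem, (mk_mem_linf hb).mp hPinf⟩
    obtain ⟨hcy, hcu⟩ := (comap_infinityPlane_eq_dualLine_embed_iff hfy hc).mp hWc
    exact hc (h c hcy hcu)

theorem center_mem_splash (hfy : f (embed F K y) = φ.t) (hy : y ≠ 0) :
    φ.center ∈ splash (hmap f '' basePlane F K) := by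
  obtain ⟨c, hcy, _, _, hc⟩ :=
    exists_linearIndependent_pair_mem (W := dualLine y) (finrank_dualLine hy)
  refine (mk_mem_splash_iff φ.t_ne_zero).mpr ⟨φ.t_mem, c, hc.ne_zero 0, ?_⟩
  rw [← hfy, f.symm_apply_apply, ← embed_dotProduct_eq_linearCombination, embed_dotProduct,
    dotProduct_comm, mem_dualLine.mp hcy, map_zero]

/-- With `c` the dual coordinates of a line of the subplane, scaled so that `c ⬝ᵥ y = 1` if the
line misses the centre, the line meets `linf K` at the point with coordinate
`-Fintype.linearCombination F (f.symm φ.u) c`. -/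
theorem splash_eq_adjoinCenter (hfy : f (embed F K y) = φ.t)
    (hT : Disjoint (dualLine y) (LinearMap.ker (Fintype.linearCombination F (f.symm φ.u))))
    {c₀ : Fin 3 → F} (hc₀ : c₀ ⬝ᵥ y = 1) :
    splash (hmap f '' basePlane F K) = φ.adjoinCenter (AffineSubspace.mk'
      (-Fintype.linearCombination F (f.symm φ.u) c₀)
      ((dualLine y).map (Fintype.linearCombination F (f.symm φ.u)))) := by
  refine φ.eq_adjoinCenter (fun P hP ↦ hP.1) ?_ fun x ↦ ?_
  · refine center_mem_splash hfy ?_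
    rintro rfl
    simp at hc₀
  · rw [InfinityFrame.point, mk_mem_splash_iff, and_iff_right (φ.smul_t_add_u_mem x),
      SetLike.mem_coe, AffineSubspace.mem_mk', Submodule.mem_map]
    simp only [linearCombination_symm_smul_t_add_u hfy]
    constructor
    · rintro ⟨c, hc, hcx⟩
      have hcy : c ⬝ᵥ y ≠ 0 := fun hcy ↦ hc <|
        Submodule.disjoint_def.mp hT c (by rwa [mem_dualLine, dotProduct_comm])
          (by simpa [hcy] using hcx)
      refine ⟨c₀ - (c ⬝ᵥ y)⁻¹ • c, ?_, ?_⟩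
      · simp [mem_dualLine, dotProduct_comm y, sub_dotProduct, hc₀, hcy]
      · have hx : Fintype.linearCombination F (f.symm φ.u) c = -(c ⬝ᵥ y) • x := by
          linear_combination (norm := module) hcx
        rw [map_sub, map_smul, hx]
        simp [hcy, add_comm]
    · rintro ⟨d, hd, hdx⟩
      have hdy : (c₀ - d) ⬝ᵥ y = 1 := by
        rw [sub_dotProduct, hc₀, dotProduct_comm d, mem_dualLine.mp hd, sub_zero]
      refine ⟨c₀ - d, ?_, ?_⟩
      · rintro h
        simp [h] at hdy
      · rw [hdy, map_sub, hdx]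
        simp

theorem exists_linearEquiv_of_linearIndependent_pair {p w₁ w₂ : K}
    (hw : LinearIndependent F ![w₁, w₂]) :
    ∃ f : (Fin 3 → K) ≃ₗ[K] (Fin 3 → K), f (embed F K (Pi.single 0 1)) = φ.t ∧
      f.symm φ.u = ![-p, w₁, w₂] := by
  have hw₁ : w₁ ≠ 0 := hw.ne_zero 0
  have hz : LinearIndependent K ![embed F K (Pi.single 0 1), ![-p, w₁, w₂]] := by
    refine LinearIndependent.pair_iff.mpr fun a b hab ↦ ?_
    have hb : b = 0 := by simpa [embed_apply, hw₁] using congrFun hab 1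
    exact ⟨by simpa [embed_apply, hb] using congrFun hab 0, hb⟩
  obtain ⟨f, hf⟩ := exists_linearEquiv_apply_eq hz φ.linearIndependent
  exact ⟨f, hf 0, f.symm_apply_eq.mpr (hf 1).symm⟩

theorem disjoint_dualLine_ker_linearCombination {p w₁ w₂ : K}
    (hw : LinearIndependent F ![w₁, w₂]) :
    Disjoint (dualLine (Pi.single 0 1))
      (LinearMap.ker (Fintype.linearCombination F ![p, w₁, w₂])) := by
  refine Submodule.disjoint_def.mpr fun c hc hcw ↦ ?_
  rw [mem_dualLine, single_one_dotProduct] at hc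
  rw [LinearMap.mem_ker, Fintype.linearCombination_apply, Fin.sum_univ_three] at hcw
  obtain ⟨h₁, h₂⟩ := LinearIndependent.pair_iff.mp hw (c 1) (c 2) (by simpa [hc] using hcw)
  ext i
  fin_cases i <;> assumption

theorem map_dualLine_linearCombination {p w₁ w₂ : K} (hw : LinearIndependent F ![w₁, w₂]) :
    (dualLine (Pi.single 0 1)).map (Fintype.linearCombination F ![p, w₁, w₂]) =
      Submodule.span F {w₁, w₂} := by
  refine (span_pair_eq_of_finrank_eq_two ?_ hw (Submodule.mem_map.mpr ⟨Pi.single 1 1, ?_, ?_⟩)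
    (Submodule.mem_map.mpr ⟨Pi.single 2 1, ?_, ?_⟩)).symm
  · rw [finrank_map_of_disjoint_ker (disjoint_dualLine_ker_linearCombination hw),
      finrank_dualLine (by simp)]
  all_goals simp [mem_dualLine, Fintype.linearCombination_apply_single]

theorem isTangentSplash_center_iff {S : Set (PGPoint K)} :
    IsTangentSplash F S φ.center ↔
      ∃ A : AffineSubspace F K, finrank F A.direction = 2 ∧ S = φ.adjoinCenter A := by
  constructor
  · rintro ⟨π, hπ, hT, rfl⟩
    obtain ⟨f, y, rfl, hfy⟩ := hπ.exists_map_embed_eq (hT.superset rfl).1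
    have hy : y ≠ 0 := by
      rintro rfl
      exact φ.t_ne_zero (by rw [← hfy, map_zero, map_zero])
    obtain ⟨c₀, hc₀⟩ := exists_dotProduct_eq_one hy
    rw [image_hmap_inter_linf_eq_singleton_iff hfy] at hT
    refine ⟨_, ?_, splash_eq_adjoinCenter hfy hT hc₀⟩
    rw [AffineSubspace.direction_mk', finrank_map_of_disjoint_ker hT, finrank_dualLine hy]
  · rintro ⟨A, hA, rfl⟩
    obtain ⟨p, hp⟩ := nonempty_of_finrank_direction_pos (A := A) (by omega)
    obtain ⟨w₁, hw₁, w₂, hw₂, hw⟩ := exists_linearIndependent_pair_mem hA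
    obtain ⟨f, hfy, hfu⟩ := exists_linearEquiv_of_linearIndependent_pair (φ := φ) (p := p) hw
    have hT : Disjoint (dualLine (Pi.single 0 1))
        (LinearMap.ker (Fintype.linearCombination F (f.symm φ.u))) := by
      rw [hfu]
      exact disjoint_dualLine_ker_linearCombination hw
    refine ⟨_, ⟨f, rfl⟩, (image_hmap_inter_linf_eq_singleton_iff hfy).mpr hT, ?_⟩
    rw [splash_eq_adjoinCenter hfy hT (c₀ := Pi.single 0 1) (by simp), hfu,
      map_dualLine_linearCombination hw, span_pair_eq_of_finrank_eq_two hA hw hw₁ hw₂,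
      Fintype.linearCombination_apply_single, cons_val_zero, one_smul, neg_neg,
      AffineSubspace.mk'_eq hp]

end TangentSplash

section Subline

variable {F K : Type*} [Field F] [Field K] [Algebra F K] {φ : InfinityFrame K}

theorem IsLine.eq_linf {ℓ : Set (PGPoint K)} (hℓ : IsLine ℓ) {P Q : PGPoint K} (hPQ : P ≠ Q)
    (hP : P ∈ ℓ ∩ linf K) (hQ : Q ∈ ℓ ∩ linf K) : ℓ = linf K := by
  obtain ⟨W, hW, rfl⟩ := hℓ
  induction P using Projectivization.ind with | h v hv => ?_
  induction Q using Projectivization.ind with | h w hw => ?_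
  rw [← linearIndependent_pair_iff_mk_ne_mk] at hPQ
  have hWinf : W = infinityPlane K := by
    rw [← span_pair_eq_of_finrank_eq_two hW hPQ ((mk_submodule_le_iff hv).mp hP.1)
      ((mk_submodule_le_iff hw).mp hQ.1)]
    exact span_pair_eq_of_finrank_eq_two (W := infinityPlane K) finrank_infinityPlane hPQ
      ((mk_mem_linf hv).mp hP.2) ((mk_mem_linf hw).mp hQ.2)
  ext P
  induction P using Projectivization.ind with
  | h v hv => rw [mk_mem_linf, ← hWinf]; exact mk_submodule_le_iff hv

variable {f : (Fin 3 → K) ≃ₗ[K] (Fin 3 → K)} {a b : Fin 3 → F} {m x : K}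

theorem map_embed_smul_add_smul (ha : f (embed F K a) = φ.t)
    (hb : f (embed F K b) = m • (x • φ.t + φ.u)) (r s : F) :
    f (embed F K (r • a + s • b)) =
      (algebraMap F K r + algebraMap F K s * m * x) • φ.t + (algebraMap F K s * m) • φ.u := by
  rw [map_add, map_add, LinearMap.map_smulₛₗ, LinearMap.map_smulₛₗ, map_smul, map_smul, ha, hb]
  module

theorem point_mem_image_hmap_iff (hm : m ≠ 0) (ha : f (embed F K a) = φ.t)
    (hb : f (embed F K b) = m • (x • φ.t + φ.u)) {z : K} :
    φ.point z ∈ hmap f '' basePlane F K ↔ ∃ r : F, r • m⁻¹ = z - x := by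
  have hab : LinearIndependent F ![a, b] := by
    rw [← linearIndependent_map_embed_pair (f := f), ha, hb]
    exact φ.linearIndependent_t_smul hm x
  constructor
  · intro hz
    obtain ⟨e, he, hze⟩ := mem_image_hmap_basePlane.mp hz
    obtain ⟨n, hn⟩ := (mk_eq_mk_iff' K _ _ _ _).mp hze
    obtain ⟨r, s, rfl⟩ := Submodule.mem_span_pair.mp <|
      mem_span_pair_of_embed_mem (W := (infinityPlane K).comap f.toLinearMap)
        ((finrank_comap_equiv f _).trans finrank_infinityPlane) hab
        (by simpa [ha] using φ.t_mem)
        (by simpa [hb] using Submodule.smul_mem _ m (φ.smul_t_add_u_mem x))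
        ((mk_mem_linf he).mp (hze ▸ φ.point_mem_linf z))
    rw [map_embed_smul_add_smul ha hb] at hn
    obtain ⟨ht, hu⟩ := φ.eq_zero_of_smul_t_add_smul_u
      (a := n * (algebraMap F K r + algebraMap F K s * m * x) - z)
      (b := n * (algebraMap F K s * m) - 1) (by linear_combination (norm := module) hn)
    have hs : algebraMap F K s ≠ 0 := by
      rintro hs
      simp [hs] at hu
    refine ⟨r / s, ?_⟩
    rw [Algebra.smul_def, map_div₀]
    field_simp
    linear_combination algebraMap F K s * m * ht -
      (algebraMap F K r + algebraMap F K s * m * x) * hu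
  · rintro ⟨r, hr⟩
    rw [Algebra.smul_def, ← div_eq_mul_inv, div_eq_iff hm] at hr
    have hz : f (embed F K (r • a + (1 : F) • b)) = m • (z • φ.t + φ.u) := by
      rw [map_embed_smul_add_smul ha hb, map_one, hr]
      module
    have hz₀ : f (embed F K (r • a + (1 : F) • b)) ≠ 0 :=
      hz ▸ smul_ne_zero hm (φ.smul_t_add_u_ne_zero z)
    exact mem_image_hmap_basePlane.mpr ⟨_, hz₀, (mk_eq_mk_iff' K _ _ _ _).mpr
      ⟨m⁻¹, by rw [hz, inv_smul_smul₀ hm]⟩⟩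

theorem image_hmap_inter_linf_eq_adjoinCenter (hm : m ≠ 0) (ha : f (embed F K a) = φ.t)
    (hb : f (embed F K b) = m • (x • φ.t + φ.u)) :
    hmap f '' basePlane F K ∩ linf K =
      φ.adjoinCenter (AffineSubspace.mk' x (Submodule.span F {m⁻¹})) := by
  refine φ.eq_adjoinCenter Set.inter_subset_right
    ⟨center_mem_image_hmap ha, φ.center_mem_linf⟩ fun z ↦ ?_
  rw [Set.mem_inter_iff, and_iff_left (φ.point_mem_linf z), point_mem_image_hmap_iff hm ha hb,
    SetLike.mem_coe, AffineSubspace.mem_mk', Submodule.mem_span_singleton, vsub_eq_sub]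

theorem IsSubline.exists_eq_adjoinCenter {q : ℕ} (hq : 0 < q) {ℓ : Set (PGPoint K)}
    (hℓ : IsSubline F q ℓ) (hℓinf : ℓ ⊆ linf K) (hT : φ.center ∈ ℓ) :
    ∃ L : AffineSubspace F K, finrank F L.direction = 1 ∧ ℓ = φ.adjoinCenter L := by
  obtain ⟨S, l, hS, hl, hcard, rfl⟩ := hℓ
  have hlt : 1 < (S ∩ l).ncard := by omega
  obtain ⟨P, hP, hPT⟩ := Set.exists_ne_of_one_lt_ncard hlt φ.center
  obtain rfl := hl.eq_linf hPT ⟨hP.2, hℓinf hP⟩ ⟨hT.2, hℓinf hT⟩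
  obtain ⟨x, rfl⟩ := (φ.eq_center_or_eq_point hP.2).resolve_left hPT
  obtain ⟨f, a, rfl, ha⟩ := hS.exists_map_embed_eq hT.1
  obtain ⟨b, hb, hxb⟩ := mem_image_hmap_basePlane.mp hP.1
  obtain ⟨m, hm⟩ := (mk_eq_mk_iff K _ _ _ _).mp hxb.symm
  refine ⟨_, ?_, image_hmap_inter_linf_eq_adjoinCenter (x := x) m.ne_zero ha hm.symm⟩
  rw [AffineSubspace.direction_mk', finrank_span_singleton (inv_ne_zero m.ne_zero)]

end Subline

section Counting

variable {k V : Type*} [Field k] [AddCommGroup V] [Module k V]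

theorem finrank_comap_mkQ [FiniteDimensional k V] (N : Submodule k V)
    (U : Submodule k (V ⧸ N)) : finrank k (U.comap N.mkQ) = finrank k U + finrank k N := by
  have hN : N ≤ U.comap N.mkQ := Submodule.le_comap_mkQ N U
  rw [← LinearMap.finrank_range_add_finrank_ker (N.mkQ.domRestrict (U.comap N.mkQ)),
    LinearMap.range_domRestrict, Submodule.map_comap_eq_of_surjective N.mkQ_surjective,
    LinearMap.ker_domRestrict, Submodule.ker_mkQ,
    (Submodule.comapSubtypeEquivOfLe hN).finrank_eq]

theorem ncard_setOf_le_finrank_eq_add_one [FiniteDimensional k V] (N : Submodule k V) :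
    {W : Submodule k V | N ≤ W ∧ finrank k W = finrank k N + 1}.ncard =
      Nat.card (Projectivization k (V ⧸ N)) := by
  have hrange : {W : Submodule k V | N ≤ W ∧ finrank k W = finrank k N + 1} =
      Set.range fun P : Projectivization k (V ⧸ N) ↦ P.submodule.comap N.mkQ := by
    ext W
    constructor
    · rintro ⟨hNW, hW⟩
      have hcomap : (W.map N.mkQ).comap N.mkQ = W := by
        rw [Submodule.comap_map_mkQ, sup_eq_right.mpr hNW]
      have hline : finrank k (W.map N.mkQ) = 1 := by
        have := finrank_comap_mkQ N (W.map N.mkQ)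
        rw [hcomap] at this
        omega
      exact ⟨mk'' _ hline, by simpa only [submodule_mk''] using hcomap⟩
    · rintro ⟨P, rfl⟩
      refine ⟨Submodule.le_comap_mkQ N _, ?_⟩
      rw [finrank_comap_mkQ, finrank_submodule, add_comm]
  have hinj := (Submodule.comap_injective_of_surjective N.mkQ_surjective).comp
    (submodule_injective (K := k) (V := V ⧸ N))
  rw [hrange]
  exact Set.ncard_range_of_injective hinj

theorem ncard_affineSubspace_setOf_le_finrank_direction_eq_add_one {P : Type*} [AddTorsor V P]
    [FiniteDimensional k V] {L : AffineSubspace k P} (hL : (L : Set P).Nonempty) :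
    {A : AffineSubspace k P | L ≤ A ∧
      finrank k A.direction = finrank k L.direction + 1}.ncard =
        Nat.card (Projectivization k (V ⧸ L.direction)) := by
  obtain ⟨p, hp⟩ := hL
  rw [← ncard_setOf_le_finrank_eq_add_one]
  refine Set.ncard_congr (fun A _ ↦ A.direction) ?_ ?_ ?_
  · exact fun A ⟨hLA, hA⟩ ↦ ⟨AffineSubspace.direction_le hLA, hA⟩
  · intro A B ⟨hLA, _⟩ ⟨hLB, _⟩ hAB
    exact AffineSubspace.ext_of_direction_eq hAB ⟨p, hLA hp, hLB hp⟩
  · intro W ⟨hLW, hW⟩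
    refine ⟨AffineSubspace.mk' p W, ⟨?_, ?_⟩, AffineSubspace.direction_mk' p W⟩
    · rw [← AffineSubspace.mk'_eq hp, AffineSubspace.mk'_le_mk'_iff]
      exact hLW
    · rw [AffineSubspace.direction_mk', hW]

end Counting

theorem statement14_general {F K : Type*} [Field F] [Field K] [Finite F] [Algebra F K]
    [FiniteDimensional F K] {T : PGPoint K} {ℓ : Set (PGPoint K)}
    (hℓ : IsSubline F (Nat.card F) ℓ) (hℓinf : ℓ ⊆ linf K) (hTℓ : T ∈ ℓ) :
    {S : Set (PGPoint K) | IsTangentSplash F S T ∧ ℓ ⊆ S}.ncard =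
      ∑ i ∈ Finset.range (finrank F K - 1), Nat.card F ^ i := by
  obtain ⟨φ, rfl⟩ := exists_infinityFrame_center_eq (hℓinf hTℓ)
  obtain ⟨L, hL, rfl⟩ := hℓ.exists_eq_adjoinCenter Nat.card_pos hℓinf hTℓ
  have himage : {S | IsTangentSplash F S φ.center ∧ φ.adjoinCenter L ⊆ S} =
      (φ.adjoinCenter ∘ SetLike.coe) ''
        {A : AffineSubspace F K | L ≤ A ∧ finrank F A.direction = finrank F L.direction + 1} := by
    ext S
    simp only [isTangentSplash_center_iff, hL, Set.mem_ofPred_eq, Set.mem_image]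
    constructor
    · rintro ⟨⟨A, hA, rfl⟩, hLA⟩
      exact ⟨A, ⟨φ.adjoinCenter_subset_adjoinCenter.mp hLA, hA⟩, rfl⟩
    · rintro ⟨A, ⟨hLA, hA⟩, rfl⟩
      exact ⟨⟨A, hA, rfl⟩, φ.adjoinCenter_subset_adjoinCenter.mpr hLA⟩
  rw [himage, Set.ncard_image_of_injective _ (φ.adjoinCenter_injective.comp SetLike.coe_injective),
    ncard_affineSubspace_setOf_le_finrank_direction_eq_add_one
      (nonempty_of_finrank_direction_pos (hL ▸ one_pos))]
  refine Projectivization.card_of_finrank F _ ?_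
  rw [Submodule.finrank_quotient, hL]

/-- for a point `T` of `ℓ∞` and an order-`q`-subline `ℓ` of `ℓ∞`
through `T`, there are exactly `q+1` tangent splashes of `ℓ∞` with centre `T`
containing `ℓ`. -/
theorem statement14 (q : ℕ) (F K : Type) [Field F] [Field K] [Fintype F] [Fintype K]
    [Algebra F K] (hF : Fintype.card F = q) (hK : Fintype.card K = q ^ 3)
    (T : PGPoint K) (hT : T ∈ linf K)
    (ℓ : Set (PGPoint K)) (hℓ : IsSubline F q ℓ) (hℓinf : ℓ ⊆ linf K) (hTℓ : T ∈ ℓ) :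
    {S : Set (PGPoint K) | IsTangentSplash F S T ∧ ℓ ⊆ S}.ncard = q + 1 := by
  subst hF
  have hfinrank : finrank F K = 3 := by
    have := Module.card_eq_pow_finrank (K := F) (V := K)
    rw [hK] at this
    exact Nat.pow_right_injective Fintype.one_lt_card this.symm
  rw [← Nat.card_eq_fintype_card] at hℓ ⊢
  rw [statement14_general hℓ hℓinf hTℓ, hfinrank, Finset.sum_range_succ', Finset.sum_range_one,
    pow_zero, pow_one]

end TangentSplashPaper
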